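/- arXiv:1909.04484 — 4 statements merged into one kernel-verified Lean document; each statement's English description precedes it below -/
import Mathlib

section
/- Assume F ∈ C¹(ℝ,ℝ) with F(0) = 0, F(x) > 0 for all x ≠ 0, and F′(x) = O(1/|log x|) as x → 0⁺. Then there exists ε₁* > 0 such that for every ε with 0 ≤ ε < ε₁* one has ψ^ε(β) < β for all β > 2; in particular β = 2 is the unique fixed point of ψ^ε on [2, ∞). -/
/-- The orbit of `1` under the β-map `T_β(x) = βx mod 1`: `t₀ = 1`,
`t_{n+1} = β t_n − ⌊β t_n⌋`. -/
noncomputable def betaOrbit (β : ℝ) : ℕ → ℝ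
  | 0 => 1
  | n + 1 => Int.fract (β * betaOrbit β n)

/-- `E(β) = (∑ t_n(β)²/(2βⁿ)) / (∑ t_n(β)/βⁿ)`, the expectation of the unique acim of
the β-map. -/
noncomputable def Ebeta (β : ℝ) : ℝ :=
  (∑' n : ℕ, (betaOrbit β n) ^ 2 / (2 * β ^ n)) / (∑' n : ℕ, betaOrbit β n / β ^ n)

/-- `ψ^ε(β) = 2 + ε F(1/E(β) − 2)`. -/
noncomputable def psi (ε : ℝ) (F : ℝ → ℝ) (β : ℝ) : ℝ :=
  2 + ε * F (1 / Ebeta β - 2)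

theorem orb_nonneg (β : ℝ) (n : ℕ) : 0 ≤ betaOrbit β n := by
  cases n with
  | zero => simp [betaOrbit]
  | succ n => exact Int.fract_nonneg _

theorem orb_le_one (β : ℝ) (n : ℕ) : betaOrbit β n ≤ 1 := by
  cases n with
  | zero => simp [betaOrbit]
  | succ n => exact (Int.fract_lt_one _).le

theorem orb_growth (β : ℝ) (hβ : 2 ≤ β) (n : ℕ) :
    betaOrbit β (n + 1) ≤ (β - 2) * β ^ n := by
  induction n with
  | zero =>
    have h : (2 : ℤ) ≤ ⌊β⌋ := Int.le_floor.2 (by exact_mod_cast hβ)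
    have h' : (2 : ℝ) ≤ (⌊β⌋ : ℝ) := by exact_mod_cast h
    simp only [betaOrbit, Int.fract, mul_one, pow_zero]
    linarith
  | succ n ih =>
    have h0 : 0 ≤ β * betaOrbit β (n + 1) := mul_nonneg (by linarith) (orb_nonneg _ _)
    have h1 : betaOrbit β (n + 1 + 1) ≤ β * betaOrbit β (n + 1) := by
      have h2 : (0 : ℝ) ≤ (⌊β * betaOrbit β (n + 1)⌋ : ℝ) := by
        exact_mod_cast Int.floor_nonneg.2 h0
      show Int.fract (β * betaOrbit β (n + 1)) ≤ _
      unfold Int.fract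
      linarith
    calc _ ≤ _ := h1
      _ ≤ β * ((β - 2) * β ^ n) := mul_le_mul_of_nonneg_left ih (by linarith)
      _ = _ := by ring

theorem term_le (β : ℝ) (hβ : 2 ≤ β) (n : ℕ) : betaOrbit β n / β ^ n ≤ (1 / 2) ^ n := by
  have h2 : (2 : ℝ) ^ n ≤ β ^ n := pow_le_pow_left₀ (by norm_num) hβ n
  have h3 : (0 : ℝ) < 2 ^ n := by positivity
  calc betaOrbit β n / β ^ n ≤ 1 / 2 ^ n :=
        div_le_div₀ zero_le_one (orb_le_one _ _) h3 h2
    _ = _ := by rw [one_div_pow]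

theorem term_nonneg (β : ℝ) (hβ : 2 ≤ β) (n : ℕ) : 0 ≤ betaOrbit β n / β ^ n :=
  div_nonneg (orb_nonneg _ _) (pow_nonneg (by linarith) _)

theorem summable_D (β : ℝ) (hβ : 2 ≤ β) : Summable fun n : ℕ => betaOrbit β n / β ^ n :=
  Summable.of_nonneg_of_le (term_nonneg β hβ) (term_le β hβ) summable_geometric_two

theorem D_le (β : ℝ) (hβ : 2 ≤ β) (m : ℕ) :
    ∑' n : ℕ, betaOrbit β n / β ^ n ≤ 1 + m * (β - 2) / 2 + (1 / 2) ^ m := by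
  have hs := summable_D β hβ
  rw [← hs.sum_add_tsum_nat_add (m + 1), Finset.sum_range_succ']
  have h1 : ∑ k ∈ Finset.range m, betaOrbit β (k + 1) / β ^ (k + 1) ≤ m * (β - 2) / 2 := by
    have : ∀ k ∈ Finset.range m, betaOrbit β (k + 1) / β ^ (k + 1) ≤ (β - 2) / 2 := by
      intro k _
      have hp : (0 : ℝ) < β ^ k := pow_pos (by linarith) _
      rw [div_le_iff₀ (by positivity)]
      have := orb_growth β hβ k
      have h4 : (β - 2) * β ^ k * 2 ≤ (β - 2) * β ^ k * β :=
        mul_le_mul_of_nonneg_left hβ (mul_nonneg (by linarith) hp.le)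
      rw [pow_succ]
      linarith
    calc _ ≤ _ := Finset.sum_le_sum this
      _ = _ := by simp; ring
  have h2 : ∑' i : ℕ, betaOrbit β (i + (m + 1)) / β ^ (i + (m + 1)) ≤ (1 / 2) ^ m := by
    have hg : Summable fun i : ℕ => ((1 : ℝ) / 2) ^ i * (1 / 2) ^ (m + 1) :=
      summable_geometric_two.mul_right _
    have hs' : Summable fun i : ℕ => betaOrbit β (i + (m + 1)) / β ^ (i + (m + 1)) :=
      (summable_nat_add_iff (f := fun n : ℕ => betaOrbit β n / β ^ n) (m + 1)).2 hs
    have hle : ∀ i : ℕ, betaOrbit β (i + (m + 1)) / β ^ (i + (m + 1)) ≤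
        ((1 : ℝ) / 2) ^ i * (1 / 2) ^ (m + 1) := by
      intro i
      have h5 := term_le β hβ (i + (m + 1))
      rwa [pow_add (1 / 2 : ℝ)] at h5
    have h6 := hs'.tsum_le_tsum hle hg
    have h7 : ∑' i : ℕ, ((1 : ℝ) / 2) ^ i * (1 / 2) ^ (m + 1) = (1 / 2) ^ m := by
      rw [tsum_mul_right, tsum_geometric_two, pow_succ]; ring
    rwa [h7] at h6
  have h3 : betaOrbit β 0 / β ^ 0 = 1 := by simp [betaOrbit]
  rw [h3]
  linarith

theorem x_bounds (β : ℝ) (hβ : 2 ≤ β) (m : ℕ) :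
    0 ≤ 1 / Ebeta β - 2 ∧ 1 / Ebeta β - 2 ≤ m * (β - 2) + 2 * (1 / 2) ^ m := by
  have hs := summable_D β hβ
  have hD := D_le β hβ m
  have hle : ∀ n, (betaOrbit β n) ^ 2 / (2 * β ^ n) ≤ betaOrbit β n / β ^ n * (1 / 2) := by
    intro n
    have hp : (0 : ℝ) < β ^ n := pow_pos (by linarith) _
    have h0 := orb_nonneg β n
    have h1 := orb_le_one β n
    calc (betaOrbit β n) ^ 2 / (2 * β ^ n) ≤ betaOrbit β n / (2 * β ^ n) := by
          gcongr
          nlinarith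
      _ = _ := by field_simp
  have hnn : ∀ n, 0 ≤ (betaOrbit β n) ^ 2 / (2 * β ^ n) := by
    intro n
    have hp : (0 : ℝ) < β ^ n := pow_pos (by linarith) _
    positivity
  have hsN : Summable fun n : ℕ => (betaOrbit β n) ^ 2 / (2 * β ^ n) :=
    Summable.of_nonneg_of_le hnn hle (hs.mul_right _)
  have hN1 := hsN.tsum_le_tsum hle (hs.mul_right _)
  rw [tsum_mul_right] at hN1
  have hN2 := hsN.le_tsum 0 (fun j _ => hnn j)
  unfold Ebeta
  set D := ∑' n : ℕ, betaOrbit β n / β ^ n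
  set N := ∑' n : ℕ, (betaOrbit β n) ^ 2 / (2 * β ^ n)
  have hN3 : 1 / 2 ≤ N := by simpa [betaOrbit] using hN2
  have hNpos : 0 < N := by linarith
  rw [one_div_div]
  constructor
  · rw [sub_nonneg, le_div_iff₀ hNpos]; linarith
  · rw [sub_le_iff_le_add, div_le_iff₀ hNpos]
    have : 0 ≤ (m * (β - 2) / 2 + (1 / 2) ^ m) * (N - 1 / 2) :=
      mul_nonneg (add_nonneg (div_nonneg (mul_nonneg (Nat.cast_nonneg _) (by linarith)) (by norm_num))
        (by positivity)) (by linarith)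
    nlinarith

theorem x_log (β : ℝ) (hβ : 2 < β) (hL : 1 ≤ -Real.log (β - 2)) :
    1 / Ebeta β - 2 ≤ 5 * (β - 2) * (-Real.log (β - 2)) := by
  set δ := β - 2 with hδ
  set L := -Real.log δ with hLd
  have hδ0 : 0 < δ := by linarith
  have hm1 : 2 * L - 0 ≤ ⌈2 * L⌉₊ := by simpa using Nat.le_ceil (2 * L)
  have hm2 : (⌈2 * L⌉₊ : ℝ) < 2 * L + 1 := Nat.ceil_lt_add_one (by linarith)
  set m := ⌈2 * L⌉₊
  have hp : ((1 : ℝ) / 2) ^ m ≤ δ := by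
    have h2 : (1 : ℝ) / 2 < Real.log 2 := by linarith [Real.log_two_gt_d9]
    have : ((1 : ℝ) / 2) ^ m = Real.exp (-(m * Real.log 2)) := by
      rw [Real.exp_neg, Real.exp_nat_mul, Real.exp_log (by norm_num)]; simp
    rw [this, ← Real.le_log_iff_exp_le hδ0]
    nlinarith
  have := (x_bounds β hβ.le m).2
  nlinarith

theorem stmt10 (F : ℝ → ℝ) (hF : ContDiff ℝ 1 F) (hF0 : F 0 = 0)
    (hFpos : ∀ x : ℝ, x ≠ 0 → 0 < F x)
    (hF' : ∃ C > (0:ℝ), ∃ x₀ ∈ Set.Ioo (0:ℝ) 1, ∀ x : ℝ, 0 < x → x < x₀ →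
      |deriv F x| ≤ C / |Real.log x|) :
    ∃ ε₁ > (0:ℝ), ∀ ε : ℝ, 0 ≤ ε → ε < ε₁ →
      (∀ β : ℝ, 2 < β → psi ε F β < β) ∧
      (∀ β : ℝ, 2 ≤ β → (psi ε F β = β ↔ β = 2)) := by
  obtain ⟨C, hC, x₀, ⟨hx0, hx1⟩, hd⟩ := hF'
  obtain ⟨M, hM⟩ := (isCompact_Icc (a := (0:ℝ)) (b := 2)).exists_bound_of_continuousOn
    hF.continuous.continuousOn
  have hM0 : 0 ≤ M := (norm_nonneg _).trans (hM 0 (by simp))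
  set A := max 18 (-4 * Real.log x₀) + 1 with hA
  have hA1 : 18 < A := by linarith [le_max_left 18 (-4 * Real.log x₀)]
  have hA2 : -4 * Real.log x₀ < A := by linarith [le_max_right 18 (-4 * Real.log x₀)]
  -- small regime
  have small : ∀ β : ℝ, 2 < β → A ≤ -Real.log (β - 2) →
      F (1 / Ebeta β - 2) ≤ 20 * C * (β - 2) := by
    intro β hβ hL
    have hx := x_log β hβ (by linarith)
    have hxn := (x_bounds β hβ.le 0).1
    have hδ0 : 0 < β - 2 := by linarith
    have hδe : β - 2 = Real.exp (-(-Real.log (β - 2))) := by rw [neg_neg, Real.exp_log hδ0]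
    generalize 1 / Ebeta β - 2 = x at *
    generalize -Real.log (β - 2) = L at *
    generalize β - 2 = δ at *
    rcases hxn.eq_or_lt with h | hxpos
    · rw [← h, hF0]; positivity
    have hxL : x ≤ Real.exp (-(L / 4)) := by
      have hq := Real.quadratic_le_exp_of_nonneg (x := 3 * L / 4) (by linarith)
      have h5 : 5 * L ≤ Real.exp (3 * L / 4) := by nlinarith
      calc x ≤ 5 * δ * L := hx
        _ = δ * (5 * L) := by ring
        _ ≤ δ * Real.exp (3 * L / 4) := by gcongr
        _ = _ := by rw [hδe, ← Real.exp_add]; congr 1; ring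
    have hxx : x < x₀ := by
      refine hxL.trans_lt ?_
      rw [← Real.lt_log_iff_exp_lt hx0]
      linarith
    obtain ⟨ξ, ⟨h1, h2⟩, h3⟩ := exists_deriv_eq_slope F hxpos hF.continuous.continuousOn
      (hF.differentiable (by norm_num)).differentiableOn
    have hdx := hd ξ h1 (by linarith)
    have hlog : L / 4 ≤ |Real.log ξ| := by
      have : Real.log ξ ≤ -(L / 4) := by
        rw [Real.log_le_iff_le_exp h1]; linarith
      rw [abs_of_neg (by linarith)]; linarith
    have hd2 : deriv F ξ ≤ C / (L / 4) := by
      refine (le_abs_self _).trans (hdx.trans ?_)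
      exact div_le_div_of_nonneg_left hC.le (by linarith) hlog
    rw [h3, hF0, sub_zero, sub_zero, div_le_iff₀ hxpos] at hd2
    have hLp : 0 < L := by linarith
    calc F x ≤ C / (L / 4) * x := hd2
      _ ≤ C / (L / 4) * (5 * δ * L) := by gcongr
      _ = 20 * C * δ := by field_simp; ring
  have main : ∃ ε₁ > (0:ℝ), ∀ ε : ℝ, 0 ≤ ε → ε < ε₁ → ∀ β : ℝ, 2 < β → psi ε F β < β := by
    refine ⟨min (1 / (20 * C)) (Real.exp (-A) / (M + 1)), by positivity, ?_⟩
    intro ε hε hε1 β hβ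
    have he1 := hε1.trans_le (min_le_left _ _)
    have he2 := hε1.trans_le (min_le_right _ _)
    rw [lt_div_iff₀ (by positivity)] at he1 he2
    have hδ0 : 0 < β - 2 := by linarith
    unfold psi
    by_cases hL : A ≤ -Real.log (β - 2)
    · have h := mul_le_mul_of_nonneg_left (small β hβ hL) hε
      nlinarith
    · have h1 : Real.exp (-A) < β - 2 := by
        rw [← Real.lt_log_iff_exp_lt hδ0]; linarith
      have hx := x_bounds β hβ.le 0
      have hb := hM (1 / Ebeta β - 2) ⟨hx.1, by simpa using hx.2⟩
      have hb' := (le_abs_self _).trans hb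
      have := mul_le_mul_of_nonneg_left hb' hε
      nlinarith
  obtain ⟨ε₁, hp, h⟩ := main
  refine ⟨ε₁, hp, fun ε h0 h1 => ⟨h ε h0 h1, fun β hβ => ⟨fun he => ?_, ?_⟩⟩⟩
  · rcases hβ.eq_or_lt with h2 | h2
    · exact h2.symm
    · exact absurd he (h ε h0 h1 β h2).ne
  · rintro rfl
    have hx : 1 / Ebeta 2 - 2 = 0 := by
      refine le_antisymm ?_ (x_bounds 2 le_rfl 0).1
      have ht : Filter.Tendsto (fun m : ℕ => 2 * ((1:ℝ) / 2) ^ m) Filter.atTop (nhds (2 * 0)) :=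
        (tendsto_pow_atTop_nhds_zero_of_lt_one (by norm_num) (by norm_num)).const_mul 2
      rw [mul_zero] at ht
      refine ge_of_tendsto' ht fun m => ?_
      simpa using (x_bounds 2 le_rfl m).2
    rw [psi, hx, hF0, mul_zero, add_zero]
end

section
/- Assume F : ℝ → ℝ is continuous with F(0) = 0 and F(x) > 0 for all x ≠ 0. For every integer ℓ ≥ 2 there exists ε* > 0 such that for all ε > ε* and each integer k with 2 ≤ k ≤ ℓ there exists β* ∈ (k, k+1) with ψ^ε(β*) = β*; together with the fixed point β = 2 this gives at least ℓ fixed points of ψ^ε on [2, ∞). -/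
open Filter Topology

/-- Left-limit orbit of `1`. -/
noncomputable def leftOrbit (β : ℝ) : ℕ → ℝ
  | 0 => 1
  | n + 1 => β * leftOrbit β n - ⌈β * leftOrbit β n⌉ + 1

/-- weighted power sums -/
noncomputable def wsum (p : ℕ) (a : ℕ → ℝ) (β : ℝ) : ℝ := ∑' n : ℕ, a n ^ p / β ^ n

lemma Ebeta_eq (β : ℝ) :
    Ebeta β = wsum 2 (betaOrbit β) β / 2 / wsum 1 (betaOrbit β) β := by
  unfold Ebeta wsum
  congr 1
  · rw [← tsum_div_const]
    congr 1; ext n; rw [div_div, mul_comm]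
  · simp

lemma betaOrbit_mem (β : ℝ) (n : ℕ) : 0 ≤ betaOrbit β n ∧ betaOrbit β n ≤ 1 := by
  cases n with
  | zero => simp [betaOrbit]
  | succ n => exact ⟨Int.fract_nonneg _, (Int.fract_lt_one _).le⟩

lemma leftOrbit_mem (β : ℝ) (n : ℕ) : 0 < leftOrbit β n ∧ leftOrbit β n ≤ 1 := by
  cases n with
  | zero => simp [leftOrbit]
  | succ n =>
    simp only [leftOrbit]
    have h1 := Int.ceil_lt_add_one (β * leftOrbit β n)
    have h2 := Int.le_ceil (β * leftOrbit β n)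
    constructor <;> linarith

lemma term_bound {a : ℕ → ℝ} (h : ∀ n, 0 ≤ a n ∧ a n ≤ 1) (p : ℕ) {β : ℝ}
    (hβ : 3 / 2 ≤ β) (n : ℕ) : ‖a n ^ p / β ^ n‖ ≤ (2 / 3 : ℝ) ^ n := by
  have hb : 0 < β := by linarith
  have h0 : 0 ≤ a n ^ p / β ^ n := div_nonneg (pow_nonneg (h n).1 _) (by positivity)
  rw [Real.norm_of_nonneg h0]
  calc a n ^ p / β ^ n ≤ 1 / β ^ n := by
        gcongr; exact pow_le_one₀ (h n).1 (h n).2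
    _ = (1 / β) ^ n := by rw [one_div_pow]
    _ ≤ (2 / 3 : ℝ) ^ n := by
        apply pow_le_pow_left₀ (by positivity)
        rw [div_le_div_iff₀ hb (by norm_num)]; linarith

lemma geo_summable : Summable (fun n : ℕ => (2 / 3 : ℝ) ^ n) :=
  summable_geometric_of_lt_one (by norm_num) (by norm_num)

lemma wsum_summable {a : ℕ → ℝ} (h : ∀ n, 0 ≤ a n ∧ a n ≤ 1) (p : ℕ) {β : ℝ}
    (hβ : 3 / 2 ≤ β) : Summable (fun n => a n ^ p / β ^ n) :=
  Summable.of_norm_bounded geo_summable (term_bound h p hβ)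

lemma wsum_ge_one {a : ℕ → ℝ} (h : ∀ n, 0 ≤ a n ∧ a n ≤ 1) (h0 : a 0 = 1) (p : ℕ) {β : ℝ}
    (hβ : 3 / 2 ≤ β) : 1 ≤ wsum p a β := by
  have hb : 0 < β := by linarith
  have := (wsum_summable h p hβ).le_tsum 0
    (fun n _ => div_nonneg (pow_nonneg (h n).1 _) (by positivity))
  simpa [h0, wsum] using this

lemma wsum_tendsto (p : ℕ) {β₀ : ℝ} (hβ : 2 ≤ β₀) {l : Filter ℝ} (hl : l ≤ 𝓝 β₀)
    {s : ℕ → ℝ} (hs : ∀ n, Tendsto (fun β => betaOrbit β n) l (𝓝 (s n))) :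
    Tendsto (fun β => wsum p (betaOrbit β) β) l (𝓝 (wsum p s β₀)) := by
  unfold wsum
  apply tendsto_tsum_of_dominated_convergence geo_summable
  · intro n
    refine ((hs n).pow p).div ((tendsto_id.mono_left hl).pow n) ?_
    exact pow_ne_zero _ (by linarith)
  · have : ∀ᶠ β in l, 3 / 2 ≤ β := by
      apply hl
      exact Ici_mem_nhds (by linarith)
    filter_upwards [this] with β h n
    exact term_bound (betaOrbit_mem β) p h n

lemma E_tendsto {β₀ : ℝ} (hβ : 2 ≤ β₀) {l : Filter ℝ} (hl : l ≤ 𝓝 β₀)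
    {s : ℕ → ℝ} (hs : ∀ n, Tendsto (fun β => betaOrbit β n) l (𝓝 (s n)))
    (h : ∀ n, 0 ≤ s n ∧ s n ≤ 1) (h0 : s 0 = 1) :
    Tendsto Ebeta l (𝓝 (wsum 2 s β₀ / 2 / wsum 1 s β₀)) := by
  have := ((wsum_tendsto 2 hβ hl hs).div_const 2).div (wsum_tendsto 1 hβ hl hs)
    (by linarith [wsum_ge_one h h0 1 (β := β₀) (by linarith)])
  refine this.congr fun β => (Ebeta_eq β).symm

lemma orbit_right {β₀ : ℝ} (hβ : 2 ≤ β₀) (n : ℕ) :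
    Tendsto (fun β => betaOrbit β n) (𝓝[>] β₀) (𝓝 (betaOrbit β₀ n)) ∧
    ∀ᶠ β in 𝓝[>] β₀, betaOrbit β₀ n ≤ betaOrbit β n := by
  induction n with
  | zero => simp [betaOrbit]
  | succ n ih =>
    obtain ⟨ht, hle⟩ := ih
    have hid : Tendsto (fun β : ℝ => β) (𝓝[>] β₀) (𝓝 β₀) := nhdsWithin_le_nhds
    have hm := hid.mul ht
    have h1 : ∀ᶠ β in 𝓝[>] β₀, β * betaOrbit β n < ⌊β₀ * betaOrbit β₀ n⌋ + 1 :=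
      hm.eventually (gt_mem_nhds (Int.lt_floor_add_one _))
    have h2 : ∀ᶠ β in 𝓝[>] β₀, β₀ * betaOrbit β₀ n ≤ β * betaOrbit β n := by
      filter_upwards [hle, self_mem_nhdsWithin] with β hb hgt
      have hgt : β₀ < β := hgt
      have := (betaOrbit_mem β₀ n).1
      have hp : 0 ≤ β := by linarith
      gcongr
    have h3 : ∀ᶠ β in 𝓝[>] β₀,
        betaOrbit β (n+1) = β * betaOrbit β n - ⌊β₀ * betaOrbit β₀ n⌋ := by
      filter_upwards [h1, h2] with β a b
      have : ⌊β * betaOrbit β n⌋ = ⌊β₀ * betaOrbit β₀ n⌋ := by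
        rw [Int.floor_eq_iff]
        exact ⟨(Int.floor_le _).trans b, a⟩
      rw [betaOrbit, Int.fract, this]
    constructor
    · refine Tendsto.congr' (h3.mono fun β h => h.symm) ?_
      rw [betaOrbit, Int.fract]
      exact hm.sub_const _
    · filter_upwards [h2, h3] with β a b
      rw [b, betaOrbit, Int.fract]
      linarith

lemma orbit_left {β₀ : ℝ} (hβ : 2 ≤ β₀) (n : ℕ) :
    Tendsto (fun β => betaOrbit β n) (𝓝[<] β₀) (𝓝 (leftOrbit β₀ n)) ∧
    ∀ᶠ β in 𝓝[<] β₀, betaOrbit β n ≤ leftOrbit β₀ n := by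
  induction n with
  | zero => simp [betaOrbit, leftOrbit]
  | succ n ih =>
    obtain ⟨ht, hle⟩ := ih
    have hid : Tendsto (fun β : ℝ => β) (𝓝[<] β₀) (𝓝 β₀) := nhdsWithin_le_nhds
    have hm := hid.mul ht
    have h1 : ∀ᶠ β in 𝓝[<] β₀, (⌈β₀ * leftOrbit β₀ n⌉ : ℝ) - 1 < β * betaOrbit β n :=
      hm.eventually (lt_mem_nhds (by linarith [Int.ceil_lt_add_one (β₀ * leftOrbit β₀ n)]))
    have h2 : ∀ᶠ β in 𝓝[<] β₀, β * betaOrbit β n < β₀ * leftOrbit β₀ n := by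
      have hpos : ∀ᶠ β in 𝓝[<] β₀, 0 < β := hid.eventually (lt_mem_nhds (by linarith))
      filter_upwards [hle, self_mem_nhdsWithin, hpos] with β hb hlt hp
      have hlt : β < β₀ := hlt
      have := (leftOrbit_mem β₀ n).1
      calc β * betaOrbit β n ≤ β * leftOrbit β₀ n := by gcongr
        _ < _ := by gcongr
    have h3 : ∀ᶠ β in 𝓝[<] β₀,
        betaOrbit β (n+1) = β * betaOrbit β n - ⌈β₀ * leftOrbit β₀ n⌉ + 1 := by
      filter_upwards [h1, h2] with β a b
      have : ⌊β * betaOrbit β n⌋ = ⌈β₀ * leftOrbit β₀ n⌉ - 1 := by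
        rw [Int.floor_eq_iff]
        push_cast
        exact ⟨a.le, by linarith [Int.le_ceil (β₀ * leftOrbit β₀ n)]⟩
      rw [betaOrbit, Int.fract, this]
      push_cast; ring
    constructor
    · refine Tendsto.congr' (h3.mono fun β h => h.symm) ?_
      rw [leftOrbit]
      exact (hm.sub_const _).add_const _
    · filter_upwards [h2, h3] with β a b
      rw [b, leftOrbit]
      linarith

lemma left_step {β : ℝ} {n : ℕ} (h : leftOrbit β n = betaOrbit β n)
    (h0 : betaOrbit β (n+1) ≠ 0) : leftOrbit β (n+1) = betaOrbit β (n+1) := by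
  rw [betaOrbit] at *
  rw [leftOrbit, h]
  have := Int.ceil_eq_add_one_sub_fract h0
  linarith

lemma left_ratio {β : ℝ} (hβ : 2 ≤ β) :
    wsum 2 (leftOrbit β) β / 2 / wsum 1 (leftOrbit β) β
      = wsum 2 (betaOrbit β) β / 2 / wsum 1 (betaOrbit β) β := by
  by_cases hz : ∃ n, betaOrbit β (n+1) = 0
  · classical
    let n := Nat.find hz
    have hn : betaOrbit β (n+1) = 0 := Nat.find_spec hz
    have hlt : ∀ m, m < n + 1 → leftOrbit β m = betaOrbit β m := by
      intro m
      induction m with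
      | zero => intro _; rfl
      | succ m ih =>
        intro hm
        exact left_step (ih (by omega)) (Nat.find_min hz (by omega))
    have hone : leftOrbit β (n+1) = 1 := by
      rw [leftOrbit, hlt n (by omega)]
      rw [betaOrbit] at hn
      have h1 : ((⌊β * betaOrbit β n⌋ : ℤ) : ℝ) = β * betaOrbit β n := by
        have := Int.floor_add_fract (β * betaOrbit β n)
        linarith
      rw [← h1, Int.ceil_intCast]; ring
    have hper : ∀ m, leftOrbit β (m + (n+1)) = leftOrbit β m := by
      intro m
      induction m with
      | zero => simpa [leftOrbit] using hone
      | succ m ih =>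
        rw [show m + 1 + (n+1) = (m + (n+1)) + 1 by ring, leftOrbit, ih, leftOrbit]
    have hzero : ∀ m, betaOrbit β (m + (n+1)) = 0 := by
      intro m
      induction m with
      | zero => simpa using hn
      | succ m ih =>
        rw [show m + 1 + (n+1) = (m + (n+1)) + 1 by ring, betaOrbit, ih]; simp
    have key : ∀ p, p ≠ 0 → wsum p (betaOrbit β) β
        = wsum p (leftOrbit β) β * (1 - (β ^ (n+1))⁻¹) := by
      intro p hp
      have hT := (wsum_summable (betaOrbit_mem β) p (β := β) (by linarith)).sum_add_tsum_nat_add (n+1)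
      have hS := (wsum_summable (fun n => ⟨(leftOrbit_mem β n).1.le, (leftOrbit_mem β n).2⟩) p
        (β := β) (by linarith)).sum_add_tsum_nat_add (n+1)
      simp only [hzero, hper, zero_pow hp, zero_div, tsum_zero, add_zero] at hT hS
      have e1 : ∑ i ∈ Finset.range (n+1), leftOrbit β i ^ p / β ^ i
          = ∑ i ∈ Finset.range (n+1), betaOrbit β i ^ p / β ^ i :=
        Finset.sum_congr rfl fun i hi => by rw [hlt i (Finset.mem_range.1 hi)]
      have e2 : ∑' i, leftOrbit β i ^ p / β ^ (i + (n+1))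
          = wsum p (leftOrbit β) β * (β ^ (n+1))⁻¹ := by
        rw [wsum, ← tsum_mul_right]
        congr 1; ext i
        rw [pow_add, ← div_div, div_eq_mul_inv]
      rw [e1, hT, e2] at hS
      change wsum p (betaOrbit β) β + _ = wsum p (leftOrbit β) β at hS
      linarith
    have hc : 1 - (β ^ (n+1))⁻¹ ≠ 0 := by
      have : (β ^ (n+1))⁻¹ < 1 := inv_lt_one_of_one_lt₀ (one_lt_pow₀ (by linarith) (by omega))
      linarith
    rw [key 2 (by norm_num), key 1 (by norm_num), mul_div_right_comm, mul_div_mul_right _ _ hc]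
  · push Not at hz
    have : leftOrbit β = betaOrbit β := by
      ext m
      induction m with
      | zero => rfl
      | succ m ih => exact left_step ih (hz m)
    rw [this]

lemma E_cont {β : ℝ} (hβ : 2 ≤ β) : ContinuousAt Ebeta β := by
  rw [continuousAt_iff_continuous_left'_right']
  constructor
  · have := E_tendsto hβ nhdsWithin_le_nhds (fun n => (orbit_left hβ n).1)
      (fun n => ⟨(leftOrbit_mem β n).1.le, (leftOrbit_mem β n).2⟩) rfl
    rw [left_ratio hβ, ← Ebeta_eq] at this
    exact this
  · have := E_tendsto hβ nhdsWithin_le_nhds (fun n => (orbit_right hβ n).1)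
      (betaOrbit_mem β) rfl
    rw [← Ebeta_eq] at this
    exact this

lemma E_pos {β : ℝ} (hβ : 2 ≤ β) : 0 < Ebeta β := by
  rw [Ebeta_eq]
  have h1 := wsum_ge_one (betaOrbit_mem β) rfl 1 (β := β) (by linarith)
  have h2 := wsum_ge_one (betaOrbit_mem β) rfl 2 (β := β) (by linarith)
  positivity

lemma psi_cont {F : ℝ → ℝ} (hF : Continuous F) (ε : ℝ) {β : ℝ} (hβ : 2 ≤ β) :
    ContinuousAt (psi ε F) β := by
  unfold psi
  have h1 : ContinuousAt (fun β => 1 / Ebeta β - 2) β :=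
    (continuousAt_const.div (E_cont hβ) (E_pos hβ).ne').sub continuousAt_const
  exact continuousAt_const.add (continuousAt_const.mul (hF.continuousAt.comp h1))

lemma E_int (k : ℕ) : Ebeta (k : ℝ) = 1 / 2 := by
  have h : ∀ n, betaOrbit (k : ℝ) (n+1) = 0 := by
    intro n
    induction n with
    | zero => simp [betaOrbit]
    | succ n ih => rw [betaOrbit, ih]; simp
  have hw : ∀ p, p ≠ 0 → wsum p (betaOrbit (k : ℝ)) k = 1 := by
    intro p hp
    rw [wsum, tsum_eq_single 0]
    · simp [betaOrbit]
    · intro n hn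
      obtain ⟨m, rfl⟩ := Nat.exists_eq_succ_of_ne_zero hn
      simp [h, hp]
  rw [Ebeta_eq, hw 2 (by norm_num), hw 1 (by norm_num)]; norm_num

lemma psi_int {F : ℝ → ℝ} (hF0 : F 0 = 0) (ε : ℝ) (k : ℕ) : psi ε F (k : ℝ) = 2 := by
  rw [psi, E_int]; norm_num [hF0]

lemma exists_mid (k : ℕ) (hk : 2 ≤ k) :
    ∃ β : ℝ, (k : ℝ) < β ∧ β < (k : ℝ) + 1 ∧ Ebeta β ≠ 1 / 2 := by
  have hk' : (2 : ℝ) ≤ k := by exact_mod_cast hk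
  have hs := Real.sq_sqrt (show (0:ℝ) ≤ (k:ℝ)^2 + 4 by positivity)
  have hs0 := Real.sqrt_nonneg ((k:ℝ)^2 + 4)
  obtain ⟨β, hβ⟩ : ∃ β : ℝ, β = (k + √((k:ℝ)^2 + 4)) / 2 := ⟨_, rfl⟩
  have h1 : (k : ℝ) < β := by nlinarith
  have h2 : β < k + 1 := by nlinarith
  have hb : 0 < β := by linarith
  have hq : β * β = k * β + 1 := by rw [hβ]; nlinarith
  have hinv : β⁻¹ = β - k := by field_simp; linarith
  have t1 : betaOrbit β 1 = β⁻¹ := by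
    rw [betaOrbit, betaOrbit, mul_one, hinv, Int.fract_eq_iff]
    exact ⟨by linarith, by linarith, k, by simp⟩
  have t2 : ∀ n, betaOrbit β (n+2) = 0 := by
    intro n
    induction n with
    | zero => rw [betaOrbit, t1, mul_inv_cancel₀ hb.ne']; simp
    | succ n ih => rw [betaOrbit, ih]; simp
  have hw : ∀ p, p ≠ 0 → wsum p (betaOrbit β) β = 1 + β⁻¹ ^ p / β := by
    intro p hp
    rw [wsum, tsum_eq_sum (s := Finset.range 2)]
    · simp [Finset.sum_range_succ, t1, betaOrbit.eq_1]
    · intro n hn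
      obtain ⟨m, rfl⟩ : ∃ m, n = m + 2 := ⟨n - 2, by simp at hn; omega⟩
      simp [t2, hp]
  refine ⟨β, h1, h2, ?_⟩
  rw [Ebeta_eq, hw 2 (by norm_num), hw 1 (by norm_num)]
  have hpos : 0 < 1 + β⁻¹ ^ 1 / β := by positivity
  intro h
  rw [div_eq_iff hpos.ne'] at h
  field_simp at h
  nlinarith

lemma main_k (F : ℝ → ℝ) (hFc : Continuous F) (hF0 : F 0 = 0)
    (hFpos : ∀ x : ℝ, x ≠ 0 → 0 < F x) (k : ℕ) :
    ∃ e > (0:ℝ), 2 ≤ k → ∀ ε : ℝ, e < ε →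
        ∃ β : ℝ, (k : ℝ) < β ∧ β < (k : ℝ) + 1 ∧ psi ε F β = β := by
  by_cases hk : 2 ≤ k
  swap
  · exact ⟨1, one_pos, fun h => absurd h hk⟩
  have hk' : (2 : ℝ) ≤ k := by exact_mod_cast hk
  obtain ⟨m, h1, h2, hE⟩ := exists_mid k hk
  have hEp := E_pos (β := m) (by linarith)
  have hc : 0 < F (1 / Ebeta m - 2) := by
    apply hFpos
    intro h
    apply hE
    field_simp at h ⊢
    linarith
  refine ⟨(m - 2) / F (1 / Ebeta m - 2), div_pos (by linarith) hc, fun _ ε hε => ?_⟩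
  rw [div_lt_iff₀ hc] at hε
  have ga : 0 < psi ε F m - m := by rw [psi]; linarith
  have gb : psi ε F ((k : ℝ) + 1) - ((k : ℝ) + 1) < 0 := by
    have := psi_int hF0 ε (k+1)
    push_cast at this
    rw [this]; linarith
  have hcont : ContinuousOn (fun β => psi ε F β - β) (Set.Icc m ((k : ℝ) + 1)) := fun x hx =>
    ((psi_cont hFc ε (by linarith [hx.1])).sub continuousAt_id).continuousWithinAt
  obtain ⟨β, hβ, h0⟩ := intermediate_value_Ioo' h2.le hcont ⟨gb, ga⟩
  exact ⟨β, by linarith [hβ.1], hβ.2, by simpa [sub_eq_zero] using h0⟩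

/-- Strong self-consistency: for every `ℓ ≥ 2` there is `ε* > 0` such that for all
`ε > ε*`, `ψ^ε` has a fixed point in each interval `(k, k+1)`, `2 ≤ k ≤ ℓ`;
together with the fixed point `β = 2` this gives at least `ℓ` fixed points. -/
theorem stmt12 (F : ℝ → ℝ) (hFc : Continuous F) (hF0 : F 0 = 0)
    (hFpos : ∀ x : ℝ, x ≠ 0 → 0 < F x) (ℓ : ℕ) (hℓ : 2 ≤ ℓ) :
    ∃ ε₀ > (0:ℝ), ∀ ε : ℝ, ε₀ < ε →
      psi ε F 2 = 2 ∧
      ∀ k : ℕ, 2 ≤ k → k ≤ ℓ →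
        ∃ β : ℝ, (k : ℝ) < β ∧ β < (k : ℝ) + 1 ∧ psi ε F β = β := by
  choose e he hfix using main_k F hFc hF0 hFpos
  refine ⟨∑ k ∈ Finset.range (ℓ + 1), e k,
    Finset.sum_pos (fun k _ => he k) ⟨0, by simp⟩, fun ε hε => ⟨?_, fun k hk hkl => ?_⟩⟩
  · exact_mod_cast psi_int hF0 ε 2
  · refine hfix k hk ε (lt_of_le_of_lt ?_ hε)
    exact Finset.single_le_sum (fun i _ => (he i).le) (Finset.mem_range.2 (by omega))
end

section
/- For every integer k ≥ 1 there exists a unique β_k ∈ (2,3) with β_k^k(β_k − 2) = 1, and β_k → 2 as k → ∞. For this β_k the orbit of 1 satisfies t_n(β_k) = β_k^{n−1}(β_k − 2) for 1 ≤ n ≤ k and t_n(β_k) = 0 for all n ≥ k + 1, and E(β_k) = (1/2)·(1 + ((β_k^k − 1)/(β_k − 1))·(β_k − 2)²/β_k) / (1 + k·(β_k − 2)/β_k); equivalently, |E(β_k) − 1/2| = |β_k − 2| · |(((β_k^k − 1)/(β_k − 1))(β_k − 2) − k) / (2β_k + 2k(β_k − 2))|. -/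
theorem orbit_le (β : ℝ) (k : ℕ) (h2 : 2 < β) (h3 : β < 3) (h : β ^ k * (β - 2) = 1) :
    ∀ m : ℕ, m + 1 ≤ k → betaOrbit β (m + 1) = β ^ m * (β - 2) := by
  intro m
  induction m with
  | zero =>
    intro _
    simp only [betaOrbit, mul_one, pow_zero, one_mul]
    rw [Int.fract_eq_iff]
    refine ⟨by linarith, by linarith, 2, by push_cast; ring⟩
  | succ m ih =>
    intro hm
    have e := ih (by omega)
    rw [betaOrbit, e, Int.fract_eq_iff]
    have hp : β ^ (m + 1) < β ^ k := pow_lt_pow_right₀ (by linarith) (by omega)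
    have h0 : 0 < β ^ (m + 1) := by positivity
    have hb : 0 < β - 2 := by linarith
    refine ⟨by positivity, ?_, 0, by push_cast; ring⟩
    nlinarith [mul_lt_mul_of_pos_right hp hb]

theorem orbit_gt (β : ℝ) (k : ℕ) (hk : 1 ≤ k) (h2 : 2 < β) (h3 : β < 3)
    (h : β ^ k * (β - 2) = 1) (n : ℕ) (hn : k + 1 ≤ n) : betaOrbit β n = 0 := by
  induction n, hn using Nat.le_induction with
  | base =>
    obtain ⟨m, rfl⟩ : ∃ m, k = m + 1 := ⟨k - 1, by omega⟩
    rw [betaOrbit, orbit_le β (m + 1) h2 h3 h m le_rfl]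
    have : β * (β ^ m * (β - 2)) = 1 := by rw [← h]; ring
    rw [this]; simp
  | succ n hn ih => rw [betaOrbit, ih]; simp

theorem Ebeta_val (β : ℝ) (k : ℕ) (hk : 1 ≤ k) (h2 : 2 < β) (h3 : β < 3)
    (h : β ^ k * (β - 2) = 1) :
    Ebeta β = (1/2) * (1 + (β ^ k - 1) / (β - 1) * (β - 2) ^ 2 / β) /
            (1 + (k : ℝ) * (β - 2) / β) := by
  have hβ : β ≠ 0 := by linarith
  have hz : ∀ n ∉ Finset.range (k + 1), betaOrbit β n = 0 := fun n hn =>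
    orbit_gt β k hk h2 h3 h n (by simpa using hn)
  have hA : ∑' n : ℕ, (betaOrbit β n) ^ 2 / (2 * β ^ n)
      = (1/2) * (1 + (β ^ k - 1) / (β - 1) * (β - 2) ^ 2 / β) := by
    rw [tsum_eq_sum (s := Finset.range (k + 1)) (fun n hn => by rw [hz n hn]; simp),
      Finset.sum_range_succ']
    have : ∀ m ∈ Finset.range k, betaOrbit β (m + 1) ^ 2 / (2 * β ^ (m + 1))
        = β ^ m * ((β - 2) ^ 2 / (2 * β)) := by
      intro m hm
      rw [orbit_le β k h2 h3 h m (by simpa using hm)]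
      field_simp
      ring
    rw [Finset.sum_congr rfl this, ← Finset.sum_mul, geom_sum_eq (by linarith)]
    simp only [betaOrbit]
    have : β - 1 ≠ 0 := by linarith
    field_simp
    ring
  have hB : ∑' n : ℕ, betaOrbit β n / β ^ n = 1 + (k : ℝ) * (β - 2) / β := by
    rw [tsum_eq_sum (s := Finset.range (k + 1)) (fun n hn => by rw [hz n hn]; simp),
      Finset.sum_range_succ']
    have : ∀ m ∈ Finset.range k, betaOrbit β (m + 1) / β ^ (m + 1) = (β - 2) / β := by
      intro m hm
      rw [orbit_le β k h2 h3 h m (by simpa using hm)]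
      field_simp
      ring
    rw [Finset.sum_congr rfl this]
    simp [betaOrbit]
    ring
  rw [Ebeta, hA, hB]

theorem Ebeta_abs (β : ℝ) (k : ℕ) (hk : 1 ≤ k) (h2 : 2 < β) (h3 : β < 3)
    (h : β ^ k * (β - 2) = 1) :
    |Ebeta β - 1/2| = |β - 2| * |((β ^ k - 1) / (β - 1) * (β - 2) - (k : ℝ)) /
              (2 * β + 2 * (k : ℝ) * (β - 2))| := by
  rw [Ebeta_val β k hk h2 h3 h, ← abs_mul]
  congr 1
  generalize (β ^ k - 1) / (β - 1) = S
  have hb : 0 < β - 2 := by linarith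
  have hβ : 0 < β := by linarith
  have h4 : (β + (k : ℝ) * (β - 2)) ≠ 0 := by positivity
  have h5 : (1 + (k : ℝ) * (β - 2) / β) ≠ 0 := by positivity
  have h6 : (2 * β + 2 * (k : ℝ) * (β - 2)) ≠ 0 := by positivity
  have e1 : (1 + (k : ℝ) * (β - 2) / β) = (β + (k : ℝ) * (β - 2)) / β := by field_simp
  have e2 : (2 * β + 2 * (k : ℝ) * (β - 2)) = 2 * (β + (k : ℝ) * (β - 2)) := by ring
  rw [e1, e2]
  generalize hD : β + (k : ℝ) * (β - 2) = D at *
  field_simp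
  rw [← hD]
  ring

theorem exists_beta (k : ℕ) (hk : 1 ≤ k) :
    ∃ β : ℝ, β ∈ Set.Ioo (2:ℝ) 3 ∧ β ^ k * (β - 2) = 1 := by
  have hc : ContinuousOn (fun x : ℝ => x ^ k * (x - 2)) (Set.Icc 2 3) := by fun_prop
  have := intermediate_value_Ioo (by norm_num : (2:ℝ) ≤ 3) hc
  obtain ⟨x, hx, e⟩ := this (show (1:ℝ) ∈ _ by
    have : (1:ℝ) < 3 ^ k := one_lt_pow₀ (by norm_num) (by omega)
    constructor
    · norm_num
    · norm_num; linarith)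
  exact ⟨x, hx, e⟩

theorem unique_beta (k : ℕ) (x y : ℝ) (hx : 2 < x) (hxy : x < y)
    (h1 : x ^ k * (x - 2) = 1) (h2 : y ^ k * (y - 2) = 1) : False := by
  have h : x ^ k ≤ y ^ k := pow_le_pow_left₀ (by linarith) hxy.le k
  have h0 : 0 < x ^ k := by positivity
  nlinarith [mul_le_mul_of_nonneg_right h (by linarith : 0 ≤ y - 2)]

/-- For every `k ≥ 1` there is a unique `β_k ∈ (2,3)` with `β_k^k (β_k − 2) = 1`;
`β_k → 2`, the orbit of `1` under `T_{β_k}` is explicit, and `E(β_k)` is given by an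
explicit rational expression in `β_k`. -/
theorem stmt15 :
    ∃ b : ℕ → ℝ,
      (∀ k : ℕ, 1 ≤ k →
        b k ∈ Set.Ioo (2:ℝ) 3 ∧
        (b k) ^ k * (b k - 2) = 1 ∧
        (∀ β ∈ Set.Ioo (2:ℝ) 3, β ^ k * (β - 2) = 1 → β = b k) ∧
        (∀ n : ℕ, 1 ≤ n → n ≤ k → betaOrbit (b k) n = (b k) ^ (n - 1) * (b k - 2)) ∧
        (∀ n : ℕ, k + 1 ≤ n → betaOrbit (b k) n = 0) ∧
        Ebeta (b k) =
          (1/2) * (1 + ((b k) ^ k - 1) / (b k - 1) * (b k - 2) ^ 2 / b k) /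
            (1 + (k : ℝ) * (b k - 2) / b k) ∧
        |Ebeta (b k) - 1/2| =
          |b k - 2| *
            |(((b k) ^ k - 1) / (b k - 1) * (b k - 2) - (k : ℝ)) /
              (2 * b k + 2 * (k : ℝ) * (b k - 2))|) ∧
      Filter.Tendsto b Filter.atTop (nhds 2) := by
  choose f hf1 hf2 using exists_beta
  refine ⟨fun k => if hk : 1 ≤ k then f k hk else 2, ?_, ?_⟩
  · intro k hk
    simp only [hk, dite_true]
    have a := hf1 k hk
    have e := hf2 k hk
    refine ⟨a, e, ?_, ?_, orbit_gt _ k hk a.1 a.2 e, Ebeta_val _ k hk a.1 a.2 e,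
      Ebeta_abs _ k hk a.1 a.2 e⟩
    · intro β hβ hb
      rcases lt_trichotomy β (f k hk) with hl | hl | hl
      · exact (unique_beta k _ _ hβ.1 hl hb e).elim
      · exact hl
      · exact (unique_beta k _ _ a.1 hl e hb).elim
    · intro n hn hnk
      obtain ⟨m, rfl⟩ : ∃ m, n = m + 1 := ⟨n - 1, by omega⟩
      exact orbit_le _ k a.1 a.2 e m hnk
  · have hl : Filter.Tendsto (fun k : ℕ => (2:ℝ) + (1/2) ^ k) Filter.atTop (nhds 2) := by
      simpa using (tendsto_pow_atTop_nhds_zero_of_lt_one (by norm_num : (0:ℝ) ≤ 1/2)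
        (by norm_num)).const_add (2:ℝ)
    refine tendsto_of_tendsto_of_tendsto_of_le_of_le tendsto_const_nhds hl ?_ ?_
    · intro k
      by_cases hk : 1 ≤ k
      · simp only [hk, dite_true]; exact (hf1 k hk).1.le
      · simp [hk]
    · intro k
      by_cases hk : 1 ≤ k
      · simp only [hk, dite_true]
        have a := (hf1 k hk).1
        have e := hf2 k hk
        have hp : (2:ℝ) ^ k ≤ f k hk ^ k := pow_le_pow_left₀ (by norm_num) a.le k
        have h2 : (2:ℝ) ^ k * (f k hk - 2) ≤ 1 := by
          rw [← e]; exact mul_le_mul_of_nonneg_right hp (by linarith)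
        have h3 : f k hk - 2 ≤ 1 / 2 ^ k := by
          rw [le_div_iff₀ (by positivity)]; linarith
        rw [one_div_pow]; linarith
      · simp [hk]
end

section
/- Fix an integer k ≥ 1 and let x_k = 2^k(2^k − 1)/(2^{2k} − 1) ∈ (0,1), the point whose binary expansion is the repeating block of k ones followed by k zeros. Let T(x) = 2x mod 1 be the doubling map and let μ_k = (1/(2k)) ∑_{j=0}^{2k−1} δ_{T^j(x_k)} be the uniform measure on the orbit of x_k. Then T^{2k}(x_k) = x_k, the orbit is symmetric about 1/2 (if y lies on the orbit then so does 1 − y), E_{μ_k} = 1/2, and for every ε ≥ 0 and every F : ℝ → ℝ with F(0) = 0, μ_k is an invariant measure of the self-consistent system: (T_{μ_k}^ε)_*μ_k = μ_k. -/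
open MeasureTheory

/-- Lebesgue measure on the interval `[0,1]`. -/
noncomputable def lebI : Measure ℝ := volume.restrict (Set.Icc 0 1)

/-- `E_μ = ∫₀¹ x dμ(x)`. -/
noncomputable def Emu (μ : Measure ℝ) : ℝ := ∫ x in Set.Icc (0:ℝ) 1, x ∂μ

/-- The self-consistent dynamics `T_μ^ε(x) = (2 + ε F(1/E_μ − 2)) x mod 1`. -/
noncomputable def Tsc (ε : ℝ) (F : ℝ → ℝ) (μ : Measure ℝ) (x : ℝ) : ℝ :=
  Int.fract ((2 + ε * F (1 / Emu μ - 2)) * x)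

open scoped ENNReal

lemma iter_fract (x : ℝ) (hx : x ∈ Set.Ioo (0:ℝ) 1) (j : ℕ) :
    (fun x : ℝ => Int.fract (2 * x))^[j] x = Int.fract (2 ^ j * x) := by
  induction j with
  | zero => simp [Int.fract_eq_self.2 ⟨hx.1.le, hx.2⟩]
  | succ n ih =>
    rw [Function.iterate_succ_apply', ih]
    rw [Int.fract_eq_fract]
    refine ⟨-2 * ⌊(2:ℝ) ^ n * x⌋, ?_⟩
    rw [Int.fract]
    push_cast
    ring

/-- The uniform measure on the doubling-map orbit of the point with binary expansion
consisting of the repeating block of `k` ones followed by `k` zeros is symmetric about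
`1/2`, has expectation `1/2`, and is invariant for the self-consistent system. -/
theorem stmt18 (k : ℕ) (hk : 1 ≤ k) :
    let T : ℝ → ℝ := fun x => Int.fract (2 * x)
    let x₀ : ℝ := 2 ^ k * (2 ^ k - 1) / (2 ^ (2 * k) - 1)
    let μ : Measure ℝ := ((2 * k : ℕ) : ℝ≥0∞)⁻¹ •
      ∑ j ∈ Finset.range (2 * k), Measure.dirac (T^[j] x₀)
    x₀ ∈ Set.Ioo (0:ℝ) 1 ∧
    T^[2 * k] x₀ = x₀ ∧
    (∀ j < 2 * k, ∃ i < 2 * k, T^[i] x₀ = 1 - T^[j] x₀) ∧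
    Emu μ = 1/2 ∧
    ∀ ε : ℝ, 0 ≤ ε → ∀ F : ℝ → ℝ, F 0 = 0 →
      Measure.map (Tsc ε F μ) μ = μ := by
  intro T x₀ μ
  have hp : (2:ℝ) ≤ 2 ^ k := by
    calc (2:ℝ) = 2 ^ 1 := by norm_num
      _ ≤ 2 ^ k := pow_le_pow_right₀ (by norm_num) hk
  have hx : x₀ = 2 ^ k / (2 ^ k + 1) := by
    have h1 : (2:ℝ) ^ (2 * k) - 1 = (2 ^ k - 1) * (2 ^ k + 1) := by ring
    have h2 : (2:ℝ) ^ k - 1 ≠ 0 := by linarith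
    have h3 : (2:ℝ) ^ k + 1 ≠ 0 := by linarith
    simp only [x₀, h1]
    field_simp
  have hx01 : x₀ ∈ Set.Ioo (0:ℝ) 1 := by
    rw [hx]
    refine ⟨by positivity, ?_⟩
    rw [div_lt_one (by positivity)]
    linarith
  have hit : ∀ j, T^[j] x₀ = Int.fract (2 ^ j * x₀) := iter_fract x₀ hx01
  have hTk : T^[k] x₀ = 1 - x₀ := by
    rw [hit, Int.fract_eq_iff]
    refine ⟨by linarith [hx01.2], by linarith [hx01.1], 2 ^ k - 1, ?_⟩
    rw [hx]
    push_cast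
    field_simp
    ring
  have hper : T^[2 * k] x₀ = x₀ := by
    rw [hit, Int.fract_eq_iff]
    refine ⟨hx01.1.le, hx01.2, 2 ^ k * (2 ^ k - 1), ?_⟩
    rw [hx]
    push_cast
    field_simp
    ring
  have hT0 : T 0 = 0 := by simp [T]
  have hne : ∀ j, T^[j] x₀ ≠ 0 := by
    intro j hj
    have h1 : T^[2 * k * j] x₀ = x₀ := by
      have : Function.IsPeriodicPt T (2 * k) x₀ := hper
      exact this.mul_const j
    have h2 : 2 * k * j = (2 * k * j - j) + j := by
      have : j ≤ 2 * k * j := Nat.le_mul_of_pos_left j (by omega)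
      omega
    rw [h2, Function.iterate_add_apply, hj, Function.iterate_fixed hT0] at h1
    exact hx01.1.ne h1
  have hsym : ∀ j, T^[k + j] x₀ = 1 - T^[j] x₀ := by
    intro j
    induction j with
    | zero => simpa using hTk
    | succ n ih =>
      have h := hne (n + 1)
      rw [Function.iterate_succ_apply'] at h
      rw [← add_assoc, Function.iterate_succ_apply', Function.iterate_succ_apply', ih]
      simp only [T] at h ⊢
      rw [← Int.fract_neg h, Int.fract_eq_fract]
      exact ⟨2, by push_cast; ring⟩
  have hmem : ∀ j, T^[j] x₀ ∈ Set.Icc (0:ℝ) 1 := by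
    intro j
    rw [hit]
    exact ⟨Int.fract_nonneg _, (Int.fract_lt_one _).le⟩
  have hTm : Measurable T := measurable_fract.comp (measurable_const.mul measurable_id)
  have hE : Emu μ = 1 / 2 := by
    have hr : μ.restrict (Set.Icc (0:ℝ) 1) = μ := by
      apply Measure.restrict_eq_self_of_ae_mem
      rw [ae_iff]
      simp only [μ, Measure.smul_apply, Measure.finsetSum_apply]
      have : ∀ j ∈ Finset.range (2 * k),
          Measure.dirac (T^[j] x₀) {a : ℝ | ¬ a ∈ Set.Icc (0:ℝ) 1} = 0 := by
        intro j _
        change Measure.dirac (T^[j] x₀) (Set.Icc (0:ℝ) 1)ᶜ = 0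
        rw [Measure.dirac_apply' _ (measurableSet_Icc.compl : MeasurableSet (Set.Icc (0:ℝ) 1)ᶜ)]
        simpa using hmem j
      rw [Finset.sum_eq_zero this, smul_zero]
    rw [Emu, hr]
    simp only [μ]
    rw [integral_smul_measure, integral_finsetSum_measure]
    · simp only [integral_dirac]
      rw [two_mul k, Finset.sum_range_add, ← Finset.sum_add_distrib]
      simp only [hsym]
      have hk0 : (k:ℝ) ≠ 0 := by positivity
      have hc : (((k + k : ℕ) : ℝ≥0∞)⁻¹).toReal = ((k:ℝ) + k)⁻¹ := by
        rw [ENNReal.toReal_inv, ENNReal.toReal_natCast]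
        push_cast
        rfl
      rw [hc]
      simp
      field_simp
      norm_num
    · intro j _
      exact integrable_dirac (by simp)
  refine ⟨hx01, hper, ?_, hE, ?_⟩
  · intro j hj
    by_cases hjk : j < k
    · exact ⟨k + j, by omega, hsym j⟩
    · refine ⟨j - k, by omega, ?_⟩
      have := hsym (j - k)
      rw [show k + (j - k) = j by omega] at this
      linarith
  · intro ε _ F hF
    have hTs : Tsc ε F μ = T := by
      funext x
      simp [Tsc, hE, hF, T]
    rw [hTs]
    simp only [μ]
    rw [Measure.map_smul, ← Measure.mapₗ_apply_of_measurable hTm, map_sum]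
    congr 1
    simp only [Measure.mapₗ_apply_of_measurable hTm, Measure.map_dirac' hTm,
      ← Function.iterate_succ_apply' T]
    have h1 := Finset.sum_range_succ (fun j => Measure.dirac (T^[j] x₀)) (2 * k)
    have h2 := Finset.sum_range_succ' (fun j => Measure.dirac (T^[j] x₀)) (2 * k)
    simp only [hper, Function.iterate_zero, id] at h1 h2
    have h3 := h2.symm.trans h1
    ext s hs
    have h4 := congrArg (fun m : Measure ℝ => m s) h3
    simp only [Measure.add_apply] at h4
    exact (ENNReal.add_left_inj (measure_ne_top _ _)).1 h4
end
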